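/- Let m ≥ 1, W ⊆ {0,1,…,m}, let A be an invertible m×m matrix over F_3, let b ∈ F_3^m, and let σ : F_3^m → F_3^m be the permutation σ(i) = Ai + b. Then σ is an automorphism of the abelian code C(3,m,W) if and only if for every x ∈ F_3^m with Hamming weight in W, the vector A^T x also has Hamming weight in W. -/

import Mathlib

open Matrix

/-- The automorphism group of a binary code of length `|I|` (as a set of coordinate
permutations): those permutations of the index set that map the code onto itself. -/
def codeAut {I : Type} (C : Set (I → ZMod 2)) : Set (Equiv.Perm I) :=
  { π | (fun c => c ∘ ⇑π.symm) '' C = C }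

/-- The abelian code `C(n, m, W)`: binary vectors indexed by `(Z_n)^m` whose finite-field
DFT (with respect to a primitive `n`-th root of unity `α` in a field `K` of characteristic 2)
vanishes at every frequency `j` whose Hamming weight lies outside `W`. -/
def abelianCode (n m : ℕ) [NeZero n] (W : Set ℕ) (K : Type) [Field K] (α : K) :
    Set ((Fin m → ZMod n) → ZMod 2) :=
  { a | ∀ j : Fin m → ZMod n, hammingNorm j ∉ W →
      ∑ i : Fin m → ZMod n, (if a i = 1 then (1 : K) else 0) * α ^ (∑ k, i k * j k).val = 0 }

lemma aux_perm {X : Type} [Finite X] (f : X → X) (hf : Function.Injective f) (p : X → Prop)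
    (h : ∀ x, p x → p (f x)) (x : X) : p (f x) → p x := by
  intro hx
  have h1 : f '' {x | p x} = {x | p x} := by
    apply Set.eq_of_subset_of_ncard_le
    · rintro _ ⟨y, hy, rfl⟩
      exact h y hy
    · rw [Set.ncard_image_of_injective _ hf]
    · exact Set.toFinite _
  have h2 : f x ∈ f '' {x | p x} := by rw [h1]; exact hx
  obtain ⟨y, hy, hyx⟩ := h2
  exact hf hyx ▸ hy

section
variable {m : ℕ} {K : Type} [Field K] {α : K}

lemma chi_add (hα : IsPrimitiveRoot α 3) (s t : ZMod 3) :
    α ^ (s + t).val = α ^ s.val * α ^ t.val := by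
  rw [← AddChar.zmodChar_apply hα.pow_eq_one, ← AddChar.zmodChar_apply hα.pow_eq_one,
    ← AddChar.zmodChar_apply hα.pow_eq_one, AddChar.map_add_eq_mul]

lemma chi_ne_one (hα : IsPrimitiveRoot α 3) (t : ZMod 3) (ht : t ≠ 0) : α ^ t.val ≠ 1 := by
  intro h
  have h1 := hα.dvd_of_pow_eq_one _ h
  have h2 := t.val_lt
  exact ht ((ZMod.val_eq_zero t).1 (Nat.eq_zero_of_dvd_of_lt h1 h2))

lemma chi_sum (hα : IsPrimitiveRoot α 3) (v : Fin m → ZMod 3) (hv : v ≠ 0) :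
    ∑ i : Fin m → ZMod 3, α ^ (i ⬝ᵥ v).val = 0 := by
  obtain ⟨k, hk⟩ := Function.ne_iff.1 hv
  have h1 : ∑ i : Fin m → ZMod 3, α ^ (i ⬝ᵥ v).val =
      α ^ (v k).val * ∑ i : Fin m → ZMod 3, α ^ (i ⬝ᵥ v).val := by
    rw [Finset.mul_sum, ← Equiv.sum_comp (Equiv.addLeft (Pi.single k (1 : ZMod 3)))]
    refine Finset.sum_congr rfl fun i _ => ?_
    rw [← chi_add hα]
    simp [add_dotProduct]
  have h2 := chi_ne_one hα (v k) hk
  by_contra h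
  exact h2 (mul_right_cancel₀ h (by rw [← h1, one_mul]))

lemma chi_trace [CharP K 2] (hα : IsPrimitiveRoot α 3) (t : ZMod 3) :
    (if (if t = 0 then (0 : ZMod 2) else 1) = 1 then (1 : K) else 0)
      = α ^ t.val + α ^ (-t).val := by
  have h0 : 1 + α + α ^ 2 = 0 := by
    have := hα.geom_sum_eq_zero (by norm_num)
    simpa [Finset.sum_range_succ] using this
  have h2 : (2 : K) = 0 := CharTwo.two_eq_zero
  have e1 : (-1 : ZMod 3).val = 2 := by decide
  have e2 : (1 : ZMod 3).val = 1 := by decide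
  have e3 : (2 : ZMod 3).val = 2 := by decide
  have e4 : (-2 : ZMod 3).val = 1 := by decide
  have n1 : (1 : ZMod 3) ≠ 0 := by decide
  have n2 : (2 : ZMod 3) ≠ 0 := by decide
  have ht : t = 0 ∨ t = 1 ∨ t = 2 := by revert t; decide
  rcases ht with rfl | rfl | rfl
  · simp; linear_combination -h2
  · rw [e1, e2, if_neg n1, if_pos rfl]; linear_combination h2 - h0
  · rw [e3, e4, if_neg n2, if_pos rfl]; linear_combination h2 - h0

/-- The Fourier coefficient. -/
def dft (α : K) (a : (Fin m → ZMod 3) → ZMod 2) (j : Fin m → ZMod 3) : K :=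
  ∑ i : Fin m → ZMod 3, (if a i = 1 then (1 : K) else 0) * α ^ (i ⬝ᵥ j).val

lemma dft_perm (hα : IsPrimitiveRoot α 3)
    (A : Matrix (Fin m) (Fin m) (ZMod 3)) (b : Fin m → ZMod 3)
    (σ : Equiv.Perm (Fin m → ZMod 3)) (hσ : ∀ x, σ x = A.mulVec x + b)
    (a : (Fin m → ZMod 3) → ZMod 2) (j : Fin m → ZMod 3) :
    dft α (a ∘ σ.symm) j = α ^ (b ⬝ᵥ j).val * dft α a (Aᵀ.mulVec j) := by
  unfold dft
  rw [Finset.mul_sum, ← Equiv.sum_comp σ]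
  refine Finset.sum_congr rfl fun i _ => ?_
  have : σ i ⬝ᵥ j = i ⬝ᵥ (Aᵀ.mulVec j) + b ⬝ᵥ j := by
    rw [hσ, add_dotProduct, Matrix.mulVec_transpose, dotProduct_comm i,
      ← Matrix.dotProduct_mulVec, dotProduct_comm j]
  rw [this, chi_add hα]
  simp only [Function.comp, Equiv.symm_apply_apply]
  ring

lemma dft_wit [CharP K 2] (hα : IsPrimitiveRoot α 3) (y j : Fin m → ZMod 3) :
    dft α (fun i => if i ⬝ᵥ y = 0 then (0 : ZMod 2) else 1) j =
      ∑ i : Fin m → ZMod 3, α ^ (i ⬝ᵥ (y + j)).val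
      + ∑ i : Fin m → ZMod 3, α ^ (i ⬝ᵥ (-y + j)).val := by
  unfold dft
  rw [← Finset.sum_add_distrib]
  refine Finset.sum_congr rfl fun i _ => ?_
  simp only []
  rw [chi_trace hα, dotProduct_add, dotProduct_add, chi_add hα, chi_add hα, dotProduct_neg]
  ring

end



/-- A permutation `σ : x ↦ A x + b` of `F_3^m` (with `A` invertible) is
an automorphism of the abelian code `C(3, m, W)` iff `Aᵀ` preserves the set of vectors whose
Hamming weight lies in `W`. -/
theorem statement16 (m : ℕ) (hm : 1 ≤ m) (W : Set ℕ) (hW : W ⊆ Set.Iic m)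
    (K : Type) [Field K] [CharP K 2] (α : K) (hα : IsPrimitiveRoot α 3)
    (A : Matrix (Fin m) (Fin m) (ZMod 3)) (hA : IsUnit A) (b : Fin m → ZMod 3)
    (σ : Equiv.Perm (Fin m → ZMod 3)) (hσ : ∀ x, σ x = A.mulVec x + b) :
    σ ∈ codeAut (abelianCode 3 m W K α) ↔
      ∀ x : Fin m → ZMod 3, hammingNorm x ∈ W → hammingNorm (Aᵀ.mulVec x) ∈ W := by
  classical
  have hinj : Function.Injective (fun x => Aᵀ.mulVec x) := by
    apply Matrix.mulVec_injective_of_isUnit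
    exact (Matrix.isUnit_transpose A).2 hA
  have hα0 : α ≠ 0 := hα.ne_zero (by norm_num)
  have hmem : ∀ a, a ∈ abelianCode 3 m W K α ↔ ∀ j, hammingNorm j ∉ W → dft α a j = 0 :=
    fun a => Iff.rfl
  have hmem' : ∀ a, a ∘ σ.symm ∈ abelianCode 3 m W K α ↔
      ∀ j, hammingNorm j ∉ W → dft α a (Aᵀ.mulVec j) = 0 := by
    intro a
    rw [hmem]
    refine forall_congr' fun j => imp_congr_right fun _ => ?_
    rw [dft_perm hα A b σ hσ, mul_eq_zero, or_iff_right (pow_ne_zero _ hα0)]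
  constructor
  · intro h
    have hc : ∀ j, hammingNorm j ∉ W → hammingNorm (Aᵀ.mulVec j) ∉ W := by
      intro j hj hy
      set y := Aᵀ.mulVec j with hydef
      have hy0 : y ≠ 0 := by
        intro h0
        have : j = 0 := hinj (by simp only []; rw [← hydef, h0, Matrix.mulVec_zero])
        rw [h0] at hy
        rw [this] at hj
        exact hj hy
      have hcode : (fun i => if i ⬝ᵥ y = 0 then (0 : ZMod 2) else 1) ∈ abelianCode 3 m W K α := by
        rw [hmem]
        intro k hk
        rw [dft_wit hα, chi_sum hα, chi_sum hα, add_zero]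
        · intro h0
          rw [neg_add_eq_zero] at h0
          exact hk (h0 ▸ hy)
        · intro h0
          have hk' : y = -k := eq_neg_of_add_eq_zero_left h0
          apply hk
          have : hammingNorm y = hammingNorm k := by
            rw [hk']; simp [hammingNorm]
          rwa [← this]
      have h1 : (fun i => if i ⬝ᵥ y = 0 then (0 : ZMod 2) else 1) ∘ σ.symm
          ∈ abelianCode 3 m W K α := by
        have h2 : (fun c => c ∘ ⇑σ.symm) '' (abelianCode 3 m W K α) = abelianCode 3 m W K α := h
        rw [← h2]
        exact ⟨_, hcode, rfl⟩
      have h3 := (hmem' _).1 h1 j hj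
      rw [← hydef, dft_wit hα, chi_sum hα, zero_add] at h3
      · simp at h3
        have h3' : (3 : K) = 1 := by
          have h2 : (2 : K) = 0 := CharTwo.two_eq_zero
          linear_combination h2
        rw [h3'] at h3
        simp at h3
      · intro h0
        apply hy0
        funext k
        have := congrFun h0 k
        simp only [Pi.add_apply, Pi.zero_apply] at this ⊢
        revert this
        generalize y k = t
        revert t
        decide
    intro x hx
    by_contra hn
    exact aux_perm _ hinj (fun x => hammingNorm x ∉ W) hc x hn hx
  · intro h
    have hr : ∀ x : Fin m → ZMod 3, hammingNorm (Aᵀ.mulVec x) ∈ W → hammingNorm x ∈ W :=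
      aux_perm _ hinj (fun x => hammingNorm x ∈ W) h
    have hsurj := Finite.surjective_of_injective hinj
    have key : ∀ a, a ∘ σ.symm ∈ abelianCode 3 m W K α ↔ a ∈ abelianCode 3 m W K α := by
      intro a
      rw [hmem', hmem]
      constructor
      · intro ha k hk
        obtain ⟨j, rfl⟩ := hsurj k
        exact ha j fun hj => hk (h j hj)
      · intro ha j hj
        exact ha _ fun hk => hj (hr j hk)
    change (fun c => c ∘ ⇑σ.symm) '' (abelianCode 3 m W K α) = abelianCode 3 m W K α
    ext c
    constructor
    · rintro ⟨a, ha, rfl⟩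
      exact (key a).2 ha
    · intro hc
      have e : (c ∘ σ) ∘ σ.symm = c := by funext x; simp
      exact ⟨c ∘ σ, (key _).1 (by rw [e]; exact hc), e⟩
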